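/- Let n = 3. There exists a finite constant C > 0 such that ‖T(f₁,f₂,f₃)‖_∞ ≤ C ‖f₁‖_{5/3} ‖f₂‖_{5/3} ‖f₃‖_5 for all nonnegative measurable functions f₁, f₂, f₃ on ℝ; that is, T is of strong type at the boundary point N = (3/5, 3/5, 1/5; 0). -/

import Mathlib

open MeasureTheory ENNReal

/-- The `L^p` "norm" (with respect to Lebesgue measure on `ℝ`) of an
`ℝ≥0∞`-valued function, with the convention for `p = ∞`. -/
noncomputable def lpNorm (p : ℝ≥0∞) (g : ℝ → ℝ≥0∞) : ℝ≥0∞ :=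
  if p = ∞ then essSup g (volume : Measure ℝ)
  else (∫⁻ x, g x ^ p.toReal) ^ (1 / p.toReal)

/-- The normalized (total mass 1) surface measure on the unit sphere
`S^{n-1} ⊂ ℝ^n`, viewed as a measure on `ℝ^n` supported on the sphere. -/
noncomputable def normSphere (n : ℕ) : Measure (EuclideanSpace ℝ (Fin n)) :=
  (Measure.map Subtype.val
      ((volume : Measure (EuclideanSpace ℝ (Fin n))).toSphere) Set.univ)⁻¹ •
    Measure.map Subtype.val ((volume : Measure (EuclideanSpace ℝ (Fin n))).toSphere)

/-- The multilinear spherical average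
`T(f₁,…,fₙ)(x) = ∫_{S^{n-1}} ∏_{j=1}^n f_j(x - σ_j) dσ(σ)`. -/
noncomputable def sphAvg (n : ℕ) (f : Fin n → ℝ → ℝ) (x : ℝ) : ℝ≥0∞ :=
  ∫⁻ σ, ∏ j, ENNReal.ofReal (f j (x - σ j)) ∂(normSphere n)

/-!
With `F`, `G`, `H` the powers `f₁^(5/3)`, `f₂^(5/3)`, `f₃^5`, translated and reflected, the claim is
that the spherical mean of `(F(σ₀)³ G(σ₁)³ H(σ₂))^(1/5)` is at most a constant times
`((∫F)³ (∫G)³ ∫H)^(1/5)`.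

Projection along an axis carries the measure `|σ_c| dσ` to at most Lebesgue measure on the plane of
the other two coordinates. Hence the means of `F(σ_a) G(σ_b) |σ_c|`, and of `F(σ_a)` against
suitable singular weights, are controlled by `∫F ∫G` and `∫F`. After splitting the mean by
`1 = σ₀² + σ₁² + σ₂²`, the integrand of each piece is dominated by a product of fifth roots of five
such expressions, and Hölder's inequality concludes.
-/

section Polar

variable {E : Type*} [NormedAddCommGroup E] [NormedSpace ℝ E] [FiniteDimensional ℝ E]
  [MeasurableSpace E] [BorelSpace E] (μ : Measure E) [μ.IsAddHaarMeasure]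

theorem lintegral_direction_mul_norm [Nontrivial E] {H : E → ℝ≥0∞} (hH : Measurable H)
    {ψ : ℝ → ℝ≥0∞} (hψ : Measurable ψ) :
    ∫⁻ x, H (‖x‖⁻¹ • x) * ψ ‖x‖ ∂μ =
      (∫⁻ ω, H ω ∂μ.toSphere) *
        ∫⁻ r, ψ r ∂(Measure.volumeIoiPow (Module.finrank ℝ E - 1)) := by
  have hpolar := μ.measurePreserving_homeomorphUnitSphereProd.lintegral_comp_emb
    (Homeomorph.measurableEmbedding _) (fun p => H p.1 * ψ p.2)
  rw [lintegral_prod_mul (f := fun ω : Metric.sphere (0 : E) 1 => H ω)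
    (g := fun r : Set.Ioi (0 : ℝ) => ψ r) (by fun_prop) (by fun_prop)] at hpolar
  have hpunctured : ∫⁻ x, H (‖x‖⁻¹ • x) * ψ ‖x‖ ∂μ =
      ∫⁻ x : ({0}ᶜ : Set E), H (‖x.1‖⁻¹ • x.1) * ψ ‖x.1‖ ∂(μ.comap (↑)) := by
    rw [lintegral_subtype_comap (measurableSet_singleton (0 : E)).compl
      (fun x : E => H (‖x‖⁻¹ • x) * ψ ‖x‖), restrict_compl_singleton]
  rw [hpunctured, ← hpolar]
  simp only [homeomorphUnitSphereProd_apply_fst_coe, homeomorphUnitSphereProd_apply_snd_coe]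

open scoped Pointwise in
theorem toSphere_coe_preimage_submodule {V : Submodule ℝ E} (hV : V ≠ ⊤) :
    μ.toSphere ((↑) ⁻¹' (V : Set E)) = 0 := by
  have hmeas : MeasurableSet ((↑) ⁻¹' (V : Set E) : Set (Metric.sphere (0 : E) 1)) :=
    measurable_subtype_coe V.closed_of_finiteDimensional.measurableSet
  have hcone : Set.Ioo (0 : ℝ) 1 • ((↑) '' ((↑) ⁻¹' (V : Set E) : Set (Metric.sphere (0 : E) 1)))
      ⊆ (V : Set E) := by
    rintro _ ⟨t, -, _, ⟨ω, hω, rfl⟩, rfl⟩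
    exact V.smul_mem t hω
  rw [Measure.toSphere_apply' _ hmeas, measure_mono_null hcone (μ.addHaar_submodule V hV),
    mul_zero]

end Polar

theorem lintegral_eq_two_mul_setLIntegral_Ioi_of_even {h : ℝ → ℝ≥0∞} (he : h.Even) :
    ∫⁻ x, h x = 2 * ∫⁻ x in Set.Ioi 0, h x := by
  have hneg : ∫⁻ x in Set.Iio 0, h x = ∫⁻ x in Set.Ioi 0, h x := by
    have := (Measure.measurePreserving_neg (volume : Measure ℝ)).setLIntegral_comp_preimage_emb
      (MeasurableEquiv.neg ℝ).measurableEmbedding h (Set.Ioi 0)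
    simpa [he _] using this
  rw [← lintegral_add_compl h measurableSet_Ioi, Set.compl_Ioi,
    Measure.restrict_congr_set Iio_ae_eq_Iic.symm, hneg, two_mul]

theorem lintegral_comp_inv_smul {E : Type*} [NormedAddCommGroup E] [NormedSpace ℝ E]
    [FiniteDimensional ℝ E] [MeasurableSpace E] [BorelSpace E] (μ : Measure E)
    [μ.IsAddHaarMeasure] (φ : E → ℝ≥0∞) {r : ℝ} (hr : 0 < r) :
    ∫⁻ x, φ (r⁻¹ • x) ∂μ = ENNReal.ofReal (r ^ Module.finrank ℝ E) * ∫⁻ x, φ x ∂μ := by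
  have hemb : MeasurableEmbedding fun x : E => r⁻¹ • x :=
    (Homeomorph.smulOfNeZero r⁻¹ (inv_ne_zero hr.ne')).measurableEmbedding
  rw [← hemb.lintegral_map φ, μ.map_addHaar_smul (inv_ne_zero hr.ne'), lintegral_smul_measure,
    inv_pow, inv_inv, abs_of_pos (pow_pos hr _), smul_eq_mul]

theorem lintegral_abs_div_sqrt_add_sq_mul_le (G : ℝ → ℝ≥0∞) {a : ℝ} (ha : 0 ≤ a) :
    ∫⁻ z, ENNReal.ofReal (|z| / √(a + z ^ 2)) * G √(a + z ^ 2) ≤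
      2 * ∫⁻ r in Set.Ioi 0, G r := by
  have hpos : ∀ z ∈ Set.Ioi (0 : ℝ), 0 < a + z ^ 2 := fun z hz => by
    have : 0 < z := hz
    positivity
  have hderiv : ∀ z ∈ Set.Ioi (0 : ℝ), HasDerivWithinAt (fun z => √(a + z ^ 2))
      (z / √(a + z ^ 2)) (Set.Ioi 0) z := fun z hz => by
    have h := (((hasDerivAt_pow 2 z).const_add a).sqrt (hpos z hz).ne').hasDerivWithinAt
      (s := Set.Ioi 0)
    refine HasDerivWithinAt.congr_deriv (f := fun z => √(a + z ^ 2)) h ?_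
    simpa using mul_div_mul_left z √(a + z ^ 2) (two_ne_zero (α := ℝ))
  have hinj : Set.InjOn (fun z => √(a + z ^ 2)) (Set.Ioi 0) := fun x hx y hy hxy => by
    have hsq := (Real.sqrt_inj (hpos x hx).le (hpos y hy).le).1 hxy
    exact (pow_left_inj₀ (le_of_lt hx) (le_of_lt hy) two_ne_zero).1 (add_left_cancel hsq)
  have himage : (fun z => √(a + z ^ 2)) '' Set.Ioi 0 ⊆ Set.Ioi 0 := by
    rintro _ ⟨z, hz, rfl⟩
    exact Real.sqrt_pos.2 (hpos z hz)
  rw [lintegral_eq_two_mul_setLIntegral_Ioi_of_even fun z => by simp only [abs_neg, neg_sq]]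
  gcongr 2 * ?_
  calc ∫⁻ z in Set.Ioi 0, ENNReal.ofReal (|z| / √(a + z ^ 2)) * G √(a + z ^ 2)
      = ∫⁻ z in Set.Ioi 0, ENNReal.ofReal |z / √(a + z ^ 2)| * G √(a + z ^ 2) := by
        simp only [abs_div, abs_of_nonneg (Real.sqrt_nonneg _)]
    _ = ∫⁻ r in (fun z => √(a + z ^ 2)) '' Set.Ioi 0, G r :=
        (lintegral_image_eq_lintegral_abs_deriv_mul measurableSet_Ioi hderiv hinj G).symm
    _ ≤ ∫⁻ r in Set.Ioi 0, G r := lintegral_mono_set himage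

section Slice

variable {n : ℕ}

theorem measurePreserving_coord_prod_succAbove (c : Fin (n + 1)) :
    MeasurePreserving fun x : EuclideanSpace ℝ (Fin (n + 1)) =>
      (x c, fun j => x (c.succAbove j)) :=
  (volume_preserving_piFinSuccAbove (fun _ => ℝ) c).comp (PiLp.volume_preserving_ofLp _)

theorem norm_eq_sqrt_sum_succAbove_add_sq (c : Fin (n + 1))
    (x : EuclideanSpace ℝ (Fin (n + 1))) :
    ‖x‖ = √(∑ j, x (c.succAbove j) ^ 2 + x c ^ 2) := by
  simp only [EuclideanSpace.norm_eq, Real.norm_eq_abs, sq_abs, Fin.sum_univ_succAbove _ c,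
    add_comm]

theorem lintegral_slice_direction_le (c : Fin (n + 1)) {φ : (Fin n → ℝ) → ℝ≥0∞}
    (hφ : Measurable φ) {ψ : ℝ → ℝ≥0∞} (hψ : Measurable ψ) :
    ∫⁻ x : EuclideanSpace ℝ (Fin (n + 1)),
        φ (fun j => (‖x‖⁻¹ • x) (c.succAbove j)) * ENNReal.ofReal |(‖x‖⁻¹ • x) c| * ψ ‖x‖ ≤
      2 * ((∫⁻ y, φ y) * ∫⁻ r in Set.Ioi 0, ENNReal.ofReal (r ^ n) * ψ r) := by
  let G : (Fin n → ℝ) → ℝ → ℝ≥0∞ := fun y r => φ (r⁻¹ • y) * ψ r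
  let ρ : ℝ × (Fin n → ℝ) → ℝ := fun q => √(∑ j, q.2 j ^ 2 + q.1 ^ 2)
  let K : ℝ × (Fin n → ℝ) → ℝ≥0∞ := fun q => ENNReal.ofReal (|q.1| / ρ q) * G q.2 (ρ q)
  have hG : Measurable (Function.uncurry G) := by fun_prop
  have hK : Measurable K := by fun_prop
  have hcoord : ∀ x : EuclideanSpace ℝ (Fin (n + 1)),
      φ (fun j => (‖x‖⁻¹ • x) (c.succAbove j)) * ENNReal.ofReal |(‖x‖⁻¹ • x) c| * ψ ‖x‖ =
        K (x c, fun j => x (c.succAbove j)) := fun x => by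
    have habs : |(‖x‖⁻¹ • x) c| = |x c| / ‖x‖ := by
      rw [PiLp.smul_apply, smul_eq_mul, abs_mul, abs_inv, abs_norm, inv_mul_eq_div]
    simp only [K, G, ρ, ← norm_eq_sqrt_sum_succAbove_add_sq c x, habs]
    rw [mul_right_comm, mul_comm]
    rfl
  have hscale : ∀ r ∈ Set.Ioi (0 : ℝ), ∫⁻ y, G y r =
      (∫⁻ y, φ y) * (ENNReal.ofReal (r ^ n) * ψ r) := fun r hr => by
    rw [lintegral_mul_const _ (by fun_prop), lintegral_comp_inv_smul volume φ hr,
      Module.finrank_fin_fun]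
    ring
  calc _ = ∫⁻ x : EuclideanSpace ℝ (Fin (n + 1)), K (x c, fun j => x (c.succAbove j)) :=
        lintegral_congr hcoord
    _ = ∫⁻ y, ∫⁻ z, K (z, y) := by
        rw [(measurePreserving_coord_prod_succAbove c).lintegral_comp hK,
          Measure.volume_eq_prod, lintegral_prod_symm' _ hK]
    _ ≤ ∫⁻ y, 2 * ∫⁻ r in Set.Ioi 0, G y r :=
        lintegral_mono fun y => lintegral_abs_div_sqrt_add_sq_mul_le (G y)
          (Finset.sum_nonneg fun j _ => sq_nonneg (y j))
    _ = 2 * ∫⁻ r in Set.Ioi 0, ∫⁻ y, G y r := by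
        rw [lintegral_const_mul' _ _ (by norm_num), lintegral_lintegral_swap hG.aemeasurable]
    _ = _ := by
        rw [setLIntegral_congr_fun measurableSet_Ioi hscale, lintegral_const_mul _ (by fun_prop)]

/-- The weight `|ω c|` is the Jacobian of the projection along the `c`-th axis, and the factor `2`
accounts for the two hemispheres. -/
theorem lintegral_toSphere_slice_le (c : Fin (n + 1)) {φ : (Fin n → ℝ) → ℝ≥0∞}
    (hφ : Measurable φ) :
    ∫⁻ ω, φ (fun j => ω.1 (c.succAbove j)) * ENNReal.ofReal |ω.1 c|
        ∂(volume : Measure (EuclideanSpace ℝ (Fin (n + 1)))).toSphere ≤ 2 * ∫⁻ y, φ y := by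
  let ψ : ℝ → ℝ≥0∞ := (Set.Iio 1).indicator 1
  have hψ : Measurable ψ := measurable_one.indicator measurableSet_Iio
  have hdim : Module.finrank ℝ (EuclideanSpace ℝ (Fin (n + 1))) - 1 = n := by simp
  have hradial : ∫⁻ r : Set.Ioi (0 : ℝ), ψ r ∂(Measure.volumeIoiPow n) =
      ∫⁻ r in Set.Ioi 0, ENNReal.ofReal (r ^ n) * ψ r := by
    rw [Measure.volumeIoiPow, lintegral_withDensity_eq_lintegral_mul _ (by fun_prop) (by fun_prop)]
    exact lintegral_subtype_comap measurableSet_Ioi fun r => ENNReal.ofReal (r ^ n) * ψ r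
  have hmass : ∫⁻ r : Set.Ioi (0 : ℝ), ψ r ∂(Measure.volumeIoiPow n) =
      ENNReal.ofReal (1 / (n + 1)) := by
    have hone : (0 : ℝ) < 1 := one_pos
    have h := Measure.volumeIoiPow_apply_Iio n ⟨1, hone⟩
    rw [one_pow] at h
    rw [← h, ← lintegral_indicator_one measurableSet_Iio]
    rfl
  have hpolar := lintegral_direction_mul_norm (volume : Measure (EuclideanSpace ℝ (Fin (n + 1))))
    (H := fun x => φ (fun j => x (c.succAbove j)) * ENNReal.ofReal |x c|) (by fun_prop) hψ
  have h := hpolar.symm.trans_le (lintegral_slice_direction_le c hφ hψ)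
  rw [hdim, ← hradial, hmass, ← mul_assoc] at h
  refine (ENNReal.mul_le_mul_iff_left ?_ ENNReal.ofReal_ne_top).1 h
  exact (ENNReal.ofReal_pos.2 (by positivity)).ne'

end Slice

section LineIntegrals

theorem lintegral_Ioo_sub_rpow {r v : ℝ} (hr : -1 < r) (hv : 0 ≤ v) :
    ∫⁻ t in Set.Ioo 0 v, ENNReal.ofReal ((v - t) ^ r) =
      ENNReal.ofReal (v ^ (r + 1) / (r + 1)) := by
  have hreflect := (Measure.measurePreserving_sub_left (volume : Measure ℝ) v)
    |>.setLIntegral_comp_preimage_emb (MeasurableEquiv.subLeft v).measurableEmbedding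
      (fun t => ENNReal.ofReal (t ^ r)) (Set.Ioo 0 v)
  rw [Set.preimage_const_sub_Ioo, sub_self, sub_zero] at hreflect
  rw [hreflect, Measure.restrict_congr_set Ioo_ae_eq_Ioc, ← ofReal_integral_eq_lintegral_ofReal
    (intervalIntegral.intervalIntegrable_rpow' hr).1, ← intervalIntegral.integral_of_le hv,
    integral_rpow (Or.inl hr), Real.zero_rpow (by linarith), sub_zero]
  filter_upwards [ae_restrict_mem measurableSet_Ioc] with y hy
  exact Real.rpow_nonneg hy.1.le _

theorem sqrt_sq_sub_sq_rpow_neg_le {r t v : ℝ} (hr : 0 ≤ r) (ht : 0 ≤ t) (htv : t < v) :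
    √(v ^ 2 - t ^ 2) ^ (-r) ≤ v ^ (-r / 2) * (v - t) ^ (-r / 2) := by
  have hv : 0 < v := ht.trans_lt htv
  have hvt : 0 < v - t := sub_pos.2 htv
  rw [← Real.mul_rpow hv.le hvt.le, Real.sqrt_eq_rpow, ← Real.rpow_mul (by nlinarith),
    one_div_mul_eq_div]
  exact Real.rpow_le_rpow_of_nonpos (by positivity) (by nlinarith) (by linarith)

theorem lintegral_sqrt_sq_sub_sq_rpow_neg_le {r v : ℝ} (hr : 0 < r) (hr2 : r < 2) (hv : 0 < v) :
    ∫⁻ q, ENNReal.ofReal (√(v ^ 2 - q ^ 2) ^ (-r)) ≤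
      ENNReal.ofReal (2 * v ^ (1 - r) / (1 - r / 2)) := by
  let B : ℝ → ℝ≥0∞ := (Set.Ioo 0 v).indicator fun t =>
    ENNReal.ofReal (v ^ (-r / 2)) * ENNReal.ofReal ((v - t) ^ (-r / 2))
  have hB : ∀ t ∈ Set.Ioi (0 : ℝ), ENNReal.ofReal (√(v ^ 2 - t ^ 2) ^ (-r)) ≤ B t := by
    intro t ht
    have ht0 : 0 < t := ht
    rcases lt_or_ge t v with htv | htv
    · simp only [B, Set.indicator_of_mem (Set.mem_Ioo.2 ⟨ht0, htv⟩)]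
      rw [← ENNReal.ofReal_mul (by positivity)]
      exact ENNReal.ofReal_le_ofReal (sqrt_sq_sub_sq_rpow_neg_le hr.le ht0.le htv)
    · -- The root of a negative number is `0`, and so is its negative power: no mass lies here.
      rw [Real.sqrt_eq_zero_of_nonpos (by nlinarith), Real.zero_rpow (by linarith),
        ENNReal.ofReal_zero]
      exact zero_le
  have hpow : v ^ (-r / 2) * v ^ (-r / 2 + 1) = v ^ (1 - r) := by
    rw [← Real.rpow_add hv]
    ring_nf
  calc ∫⁻ q, ENNReal.ofReal (√(v ^ 2 - q ^ 2) ^ (-r))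
      = 2 * ∫⁻ t in Set.Ioi 0, ENNReal.ofReal (√(v ^ 2 - t ^ 2) ^ (-r)) :=
        lintegral_eq_two_mul_setLIntegral_Ioi_of_even fun t => by simp only [neg_sq]
    _ ≤ 2 * ∫⁻ t, B t := by
        gcongr 2 * ?_
        exact (setLIntegral_mono' measurableSet_Ioi hB).trans (setLIntegral_le_lintegral _ _)
    _ = ENNReal.ofReal (2 * (v ^ (-r / 2) * (v ^ (-r / 2 + 1) / (-r / 2 + 1)))) := by
        rw [lintegral_indicator measurableSet_Ioo, lintegral_const_mul _ (by fun_prop),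
          lintegral_Ioo_sub_rpow (by linarith) hv.le, ← ENNReal.ofReal_mul (by positivity),
          ENNReal.ofReal_mul two_pos.le, ENNReal.ofReal_ofNat]
    _ = ENNReal.ofReal (2 * v ^ (1 - r) / (1 - r / 2)) := by
        rw [← hpow]
        ring_nf

theorem lintegral_sqrt_mul_sqrt_sq_sub_sq_rpow_le (v : ℝ) :
    ∫⁻ q, ENNReal.ofReal (√v * √(v ^ 2 - q ^ 2) ^ (-(3 / 2) : ℝ)) ≤ 8 := by
  rcases le_or_gt v 0 with hv | hv
  · simp [Real.sqrt_eq_zero_of_nonpos hv]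
  have hcancel : √v * (2 * v ^ (1 - 3 / 2 : ℝ) / (1 - 3 / 2 / 2)) = 8 := by
    have h : √v * v ^ (1 - 3 / 2 : ℝ) = 1 := by
      rw [Real.sqrt_eq_rpow, ← Real.rpow_add hv]
      norm_num
    linear_combination 8 * h
  simp_rw [ENNReal.ofReal_mul (Real.sqrt_nonneg v)]
  calc ∫⁻ q, ENNReal.ofReal √v * ENNReal.ofReal (√(v ^ 2 - q ^ 2) ^ (-(3 / 2) : ℝ))
      ≤ ENNReal.ofReal √v * ENNReal.ofReal (2 * v ^ (1 - 3 / 2 : ℝ) / (1 - 3 / 2 / 2)) := by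
        rw [lintegral_const_mul _ (by fun_prop)]
        gcongr
        exact lintegral_sqrt_sq_sub_sq_rpow_neg_le (by norm_num) (by norm_num) hv
    _ = 8 := by
        rw [← ENNReal.ofReal_mul (Real.sqrt_nonneg v), hcancel, ENNReal.ofReal_ofNat]

theorem lintegral_abs_div_sq_add_sq_le_pi (q : ℝ) :
    ∫⁻ z, ENNReal.ofReal (|q| / (q ^ 2 + z ^ 2)) ≤ ENNReal.ofReal Real.pi := by
  rcases eq_or_ne q 0 with rfl | hq
  · simp
  have hcauchy : ∀ z, ENNReal.ofReal (|q| / (q ^ 2 + z ^ 2)) =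
      ENNReal.ofReal Real.pi * ProbabilityTheory.cauchyPDF 0 ‖q‖₊ z := fun z => by
    rw [ProbabilityTheory.cauchyPDF, ← ENNReal.ofReal_mul Real.pi_pos.le]
    congr 1
    rw [ProbabilityTheory.cauchyPDFReal, coe_nnnorm, Real.norm_eq_abs, sq_abs, sub_zero]
    field_simp
    ring_nf
  simp_rw [hcauchy]
  rw [lintegral_const_mul' _ _ ENNReal.ofReal_ne_top,
    ProbabilityTheory.lintegral_cauchyPDF_eq_one 0 (nnnorm_ne_zero_iff.2 hq), mul_one]

end LineIntegrals

section NormSphere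

variable {n : ℕ}

theorem lintegral_normSphere (H : EuclideanSpace ℝ (Fin n) → ℝ≥0∞) :
    ∫⁻ σ, H σ ∂normSphere n =
      ((volume : Measure (EuclideanSpace ℝ (Fin n))).toSphere Set.univ)⁻¹ *
        ∫⁻ ω, H ω ∂(volume : Measure (EuclideanSpace ℝ (Fin n))).toSphere := by
  have hemb : MeasurableEmbedding
      ((↑) : Metric.sphere (0 : EuclideanSpace ℝ (Fin n)) 1 → EuclideanSpace ℝ (Fin n)) :=
    MeasurableEmbedding.subtype_coe Metric.isClosed_sphere.measurableSet
  rw [normSphere, lintegral_smul_measure, hemb.lintegral_map, smul_eq_mul, hemb.map_apply,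
    Set.preimage_univ]

theorem normSphere_univ_le_one : normSphere n Set.univ ≤ 1 := by
  rw [normSphere, Measure.smul_apply, smul_eq_mul]
  exact ENNReal.inv_mul_le_one _

theorem ae_normSphere_of_ae_toSphere {P : EuclideanSpace ℝ (Fin n) → Prop}
    (h : ∀ᵐ ω ∂(volume : Measure (EuclideanSpace ℝ (Fin n))).toSphere, P ω.1) :
    ∀ᵐ σ ∂normSphere n, P σ :=
  Measure.ae_smul_measure ((MeasurableEmbedding.subtype_coe
    Metric.isClosed_sphere.measurableSet).ae_map_iff.2 h) _

theorem ae_normSphere_norm_eq_one : ∀ᵐ σ ∂normSphere n, ‖σ‖ = 1 :=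
  ae_normSphere_of_ae_toSphere (Filter.Eventually.of_forall norm_eq_of_mem_sphere)

theorem ae_normSphere_coord_ne_zero (a : Fin n) : ∀ᵐ σ ∂normSphere n, σ a ≠ 0 := by
  let V : Submodule ℝ (EuclideanSpace ℝ (Fin n)) := (EuclideanSpace.proj (𝕜 := ℝ) a).ker
  have hV : V ≠ ⊤ := fun h => by
    have hmem : EuclideanSpace.single a (1 : ℝ) ∈ V := h ▸ Submodule.mem_top
    simp [V] at hmem
  exact ae_normSphere_of_ae_toSphere (measure_eq_zero_iff_ae_notMem.1
    (toSphere_coe_preimage_submodule volume hV))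

end NormSphere

section CoordinateTriples

variable {a b c : Fin 3}

theorem sum_sq_coords (hab : a ≠ b) (hac : a ≠ c) (hbc : b ≠ c) (x : EuclideanSpace ℝ (Fin 3)) :
    x a ^ 2 + x b ^ 2 + x c ^ 2 = ‖x‖ ^ 2 := by
  rw [EuclideanSpace.real_norm_sq_eq, Fin.sum_univ_three]
  fin_cases a <;> fin_cases b <;> fin_cases c <;> simp_all <;> ring

theorem two_le_toSphere_univ :
    2 ≤ (volume : Measure (EuclideanSpace ℝ (Fin 3))).toSphere Set.univ := by
  rw [Measure.toSphere_apply_univ, finrank_euclideanSpace_fin,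
    EuclideanSpace.volume_ball_fin_three, ENNReal.ofReal_one, one_pow, one_mul,
    ← ENNReal.ofReal_natCast, ← ENNReal.ofReal_mul (Nat.cast_nonneg 3), ← ENNReal.ofReal_ofNat 2]
  refine ENNReal.ofReal_le_ofReal ?_
  push_cast
  linarith [Real.pi_gt_three]

theorem lintegral_toSphere_coord_pair_le (hab : a ≠ b) (hac : a ≠ c) (hbc : b ≠ c)
    {φ : ℝ × ℝ → ℝ≥0∞} (hφ : Measurable φ) :
    ∫⁻ ω, φ (ω.1 a, ω.1 b) * ENNReal.ofReal |ω.1 c|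
        ∂(volume : Measure (EuclideanSpace ℝ (Fin 3))).toSphere ≤ 2 * ∫⁻ p, φ p := by
  have hplane : ∀ {χ : ℝ × ℝ → ℝ≥0∞}, Measurable χ → ∫⁻ y : Fin 2 → ℝ, χ (y 0, y 1) = ∫⁻ p, χ p :=
    fun hχ => (volume_preserving_finTwoArrow ℝ).lintegral_comp hχ
  have hswap : ∫⁻ p : ℝ × ℝ, φ (p.2, p.1) = ∫⁻ p, φ p :=
    (Measure.measurePreserving_swap (μ := volume) (ν := volume)).lintegral_comp hφ
  have horder : a = c.succAbove 0 ∧ b = c.succAbove 1 ∨ a = c.succAbove 1 ∧ b = c.succAbove 0 := by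
    revert a b c
    decide
  rcases horder with ⟨rfl, rfl⟩ | ⟨rfl, rfl⟩
  · rw [← hplane hφ]
    exact lintegral_toSphere_slice_le c (φ := fun y => φ (y 0, y 1)) (by fun_prop)
  · rw [← hswap, ← hplane (χ := fun p => φ (p.2, p.1)) (by fun_prop)]
    exact lintegral_toSphere_slice_le c (φ := fun y => φ (y 1, y 0)) (by fun_prop)

theorem lintegral_normSphere_coord_pair_le (hab : a ≠ b) (hac : a ≠ c) (hbc : b ≠ c)
    {φ : ℝ × ℝ → ℝ≥0∞} (hφ : Measurable φ) :
    ∫⁻ σ, φ (σ a, σ b) * ENNReal.ofReal |σ c| ∂normSphere 3 ≤ ∫⁻ p, φ p := by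
  rw [lintegral_normSphere]
  calc _ ≤ (2 : ℝ≥0∞)⁻¹ * (2 * ∫⁻ p, φ p) := by
        gcongr
        exacts [two_le_toSphere_univ, lintegral_toSphere_coord_pair_le hab hac hbc hφ]
    _ = ∫⁻ p, φ p := ENNReal.inv_mul_cancel_left (by norm_num) (by norm_num)

theorem lintegral_normSphere_mul_kernel_le (hab : a ≠ b) (hac : a ≠ c) (hbc : b ≠ c)
    {F : ℝ → ℝ≥0∞} (hF : Measurable F) {k : ℝ → ℝ → ℝ≥0∞} (hk : Measurable (Function.uncurry k))
    {A : ℝ≥0∞} (hA : ∀ p, ∫⁻ q, k p q ≤ A) :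
    ∫⁻ σ, F (σ a) * k (σ a) (σ b) * ENNReal.ofReal |σ c| ∂normSphere 3 ≤ A * ∫⁻ x, F x := by
  have hφ : Measurable fun p : ℝ × ℝ => F p.1 * k p.1 p.2 := by fun_prop
  calc _ ≤ ∫⁻ p : ℝ × ℝ, F p.1 * k p.1 p.2 := lintegral_normSphere_coord_pair_le hab hac hbc hφ
    _ = ∫⁻ p, F p * ∫⁻ q, k p q := by
        rw [Measure.volume_eq_prod, lintegral_prod _ hφ.aemeasurable]
        exact lintegral_congr fun p => lintegral_const_mul (F p) hk.of_uncurry_left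
    _ ≤ ∫⁻ p, F p * A := by
        gcongr
        exact hA _
    _ = A * ∫⁻ x, F x := by rw [lintegral_mul_const _ hF, mul_comm]

theorem lintegral_normSphere_mul_le (hab : a ≠ b) (hac : a ≠ c) (hbc : b ≠ c)
    {F G : ℝ → ℝ≥0∞} (hF : Measurable F) (hG : Measurable G) :
    ∫⁻ σ, F (σ a) * G (σ b) * ENNReal.ofReal |σ c| ∂normSphere 3 ≤
      (∫⁻ x, F x) * ∫⁻ x, G x := by
  rw [mul_comm (∫⁻ x, F x)]
  exact lintegral_normSphere_mul_kernel_le hab hac hbc hF (k := fun _ => G) (by fun_prop)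
    fun _ => le_rfl

theorem lintegral_normSphere_mul_poisson_le (hab : a ≠ b) (hac : a ≠ c) (hbc : b ≠ c)
    {F : ℝ → ℝ≥0∞} (hF : Measurable F) :
    ∫⁻ σ, F (σ a) * ENNReal.ofReal (|σ a| / (σ a ^ 2 + σ b ^ 2)) * ENNReal.ofReal |σ c|
        ∂normSphere 3 ≤ 4 * ∫⁻ x, F x := by
  refine lintegral_normSphere_mul_kernel_le hab hac hbc hF
    (k := fun p q => ENNReal.ofReal (|p| / (p ^ 2 + q ^ 2))) (by fun_prop) fun p => ?_
  calc _ ≤ ENNReal.ofReal Real.pi := lintegral_abs_div_sq_add_sq_le_pi p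
    _ ≤ ENNReal.ofReal 4 := ENNReal.ofReal_le_ofReal Real.pi_le_four
    _ = 4 := ENNReal.ofReal_ofNat 4

/-- A weight on the plane, homogeneous of degree `0`, comparable to the inverse square root of the
angle to the nearest axis. It is integrable on circles, yet two copies of it outweigh the decay of
the Poisson kernel `|q| / (q² + z²)` times the Jacobian `|z|`. -/
noncomputable def angularWeight (q z : ℝ) : ℝ :=
  √(√(q ^ 2 + z ^ 2) / |q|) + √(√(q ^ 2 + z ^ 2) / |z|)

@[fun_prop]
theorem measurable_angularWeight : Measurable (Function.uncurry angularWeight) := by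
  unfold angularWeight Function.uncurry
  fun_prop

theorem one_le_angularWeight {q : ℝ} (hq : q ≠ 0) (z : ℝ) : 1 ≤ angularWeight q z := by
  have hle : |q| ≤ √(q ^ 2 + z ^ 2) := Real.abs_le_sqrt (le_add_of_nonneg_right (sq_nonneg z))
  refine le_add_of_le_of_nonneg (Real.one_le_sqrt.2 ?_) (Real.sqrt_nonneg _)
  exact (one_le_div (abs_pos.2 hq)).2 hle

theorem one_le_angularWeight_sq_mul {q z : ℝ} (hq : q ≠ 0) (hz : z ≠ 0) :
    1 ≤ angularWeight q z ^ 2 * (|q| / (q ^ 2 + z ^ 2)) * |z| := by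
  have hq' : 0 < |q| := abs_pos.2 hq
  have hz' : 0 < |z| := abs_pos.2 hz
  set ρ := √(q ^ 2 + z ^ 2)
  have hρ : 0 < ρ := Real.sqrt_pos.2 (by positivity)
  have hρsq : ρ ^ 2 = q ^ 2 + z ^ 2 := Real.sq_sqrt (by positivity)
  have hρle : ρ ≤ |q| + |z| := by
    refine Real.sqrt_le_iff.2 ⟨by positivity, ?_⟩
    nlinarith [sq_abs q, sq_abs z]
  have hsq : ρ / |q| + ρ / |z| ≤ angularWeight q z ^ 2 := by
    have h₁ : √(ρ / |q|) ^ 2 = ρ / |q| := Real.sq_sqrt (by positivity)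
    have h₂ : √(ρ / |z|) ^ 2 = ρ / |z| := Real.sq_sqrt (by positivity)
    calc ρ / |q| + ρ / |z| = √(ρ / |q|) ^ 2 + √(ρ / |z|) ^ 2 := by rw [h₁, h₂]
      _ ≤ (√(ρ / |q|) + √(ρ / |z|)) ^ 2 := by
          rw [add_sq']
          exact le_add_of_nonneg_right (by positivity)
  rw [← hρsq]
  calc 1 ≤ (|q| + |z|) / ρ := (one_le_div hρ).2 hρle
    _ = (ρ / |q| + ρ / |z|) * (|q| / ρ ^ 2) * |z| := by
        field_simp
        ring
    _ ≤ angularWeight q z ^ 2 * (|q| / ρ ^ 2) * |z| := by gcongr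

theorem sqrt_div_abs_eq_sqrt_mul_rpow_mul_abs {v z : ℝ} (hz : z ≠ 0) :
    √(v / |z|) = √v * |z| ^ (-(3 / 2) : ℝ) * |z| := by
  have hz' : 0 < |z| := abs_pos.2 hz
  rw [Real.sqrt_div' _ hz'.le, mul_assoc, ← Real.rpow_add_one hz'.ne', div_eq_mul_inv,
    Real.sqrt_eq_rpow |z|, ← Real.rpow_neg hz'.le]
  norm_num

theorem lintegral_normSphere_mul_sqrt_div_le (hab : a ≠ b) (hac : a ≠ c) (hbc : b ≠ c)
    {F : ℝ → ℝ≥0∞} (hF : Measurable F) :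
    ∫⁻ σ, F (σ a) * ENNReal.ofReal √(√(σ b ^ 2 + σ c ^ 2) / |σ c|) ∂normSphere 3 ≤
      8 * ∫⁻ x, F x := by
  let k : ℝ → ℝ → ℝ≥0∞ := fun p q => ENNReal.ofReal
    (√√(1 - p ^ 2) * √(√(1 - p ^ 2) ^ 2 - q ^ 2) ^ (-(3 / 2) : ℝ))
  refine le_trans (le_of_eq (lintegral_congr_ae ?_))
    (lintegral_normSphere_mul_kernel_le hab hac hbc hF (k := k) (by fun_prop)
      fun p => lintegral_sqrt_mul_sqrt_sq_sub_sq_rpow_le _)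
  filter_upwards [ae_normSphere_norm_eq_one, ae_normSphere_coord_ne_zero c] with σ hσ hc
  have hsum := sum_sq_coords hab hac hbc σ
  rw [hσ, one_pow] at hsum
  have hperp : 1 - σ a ^ 2 = σ b ^ 2 + σ c ^ 2 := by linear_combination -hsum
  have hroot : √(√(1 - σ a ^ 2) ^ 2 - σ b ^ 2) = |σ c| := by
    rw [hperp, Real.sq_sqrt (by positivity), add_sub_cancel_left, Real.sqrt_sq_eq_abs]
  simp only [k, hroot]
  rw [hperp, mul_assoc, ← ENNReal.ofReal_mul (by positivity),
    sqrt_div_abs_eq_sqrt_mul_rpow_mul_abs hc]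

theorem lintegral_normSphere_mul_angularWeight_le (hab : a ≠ b) (hac : a ≠ c) (hbc : b ≠ c)
    {F : ℝ → ℝ≥0∞} (hF : Measurable F) :
    ∫⁻ σ, F (σ a) * ENNReal.ofReal (angularWeight (σ b) (σ c)) ∂normSphere 3 ≤
      16 * ∫⁻ x, F x := by
  have hb := lintegral_normSphere_mul_sqrt_div_le hac hab hbc.symm hF
  have hc := lintegral_normSphere_mul_sqrt_div_le hab hac hbc hF
  have hbc_comm : ∀ σ : EuclideanSpace ℝ (Fin 3), σ c ^ 2 + σ b ^ 2 = σ b ^ 2 + σ c ^ 2 :=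
    fun σ => add_comm _ _
  simp only [hbc_comm] at hb
  simp_rw [angularWeight, ENNReal.ofReal_add (Real.sqrt_nonneg _) (Real.sqrt_nonneg _), mul_add]
  rw [lintegral_add_left (by fun_prop)]
  calc _ ≤ 8 * (∫⁻ x, F x) + 8 * ∫⁻ x, F x := add_le_add hb hc
    _ = 16 * ∫⁻ x, F x := by ring

end CoordinateTriples

theorem lintegral_rpow_inv_mul_le_of_mul_pow_le_prod {α : Type*} [MeasurableSpace α]
    {μ : Measure α} {n : ℕ} (hn : n ≠ 0) {u w : α → ℝ≥0∞} {X : Fin n → α → ℝ≥0∞}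
    (hX : ∀ i, AEMeasurable (X i) μ) (h : ∀ᵐ x ∂μ, u x * w x ^ n ≤ ∏ i, X i x) :
    ∫⁻ x, u x ^ (n : ℝ)⁻¹ * w x ∂μ ≤ (∏ i, ∫⁻ x, X i x ∂μ) ^ (n : ℝ)⁻¹ := by
  have hn0 : (0 : ℝ) ≤ (n : ℝ)⁻¹ := by positivity
  have hsum : ∑ _i : Fin n, (n : ℝ)⁻¹ = 1 := by
    rw [Finset.sum_const, Finset.card_fin, nsmul_eq_mul, mul_inv_cancel₀ (Nat.cast_ne_zero.2 hn)]
  calc ∫⁻ x, u x ^ (n : ℝ)⁻¹ * w x ∂μ ≤ ∫⁻ x, ∏ i, X i x ^ (n : ℝ)⁻¹ ∂μ := by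
        refine lintegral_mono_ae ?_
        filter_upwards [h] with x hx
        rw [ENNReal.prod_rpow_of_nonneg hn0, ← ENNReal.pow_rpow_inv_natCast hn (w x),
          ← ENNReal.mul_rpow_of_nonneg _ _ hn0]
        exact ENNReal.rpow_le_rpow hx hn0
    _ ≤ ∏ i, (∫⁻ x, X i x ∂μ) ^ (n : ℝ)⁻¹ :=
        ENNReal.lintegral_prod_norm_pow_le _ (fun i _ => hX i) hsum fun _ _ => hn0
    _ = (∏ i, ∫⁻ x, X i x ∂μ) ^ (n : ℝ)⁻¹ := ENNReal.prod_rpow_of_nonneg hn0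

section FiveFactors

variable {a b c : Fin 3} {F G H : ℝ → ℝ≥0∞}

theorem ofReal_sq_pow_five_le {p q z : ℝ} (hp : |p| ≤ 1) (hq : q ≠ 0) (hz : z ≠ 0) :
    ENNReal.ofReal (p ^ 2) ^ 5 ≤
      ENNReal.ofReal (angularWeight q z) ^ 2 * ENNReal.ofReal (|q| / (q ^ 2 + z ^ 2)) *
        ENNReal.ofReal |z| * ENNReal.ofReal |p| ^ 2 := by
  have hw : 0 ≤ angularWeight q z := zero_le_one.trans (one_le_angularWeight hq z)
  rw [← ENNReal.ofReal_pow (sq_nonneg p), ← ENNReal.ofReal_pow hw,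
    ← ENNReal.ofReal_pow (abs_nonneg p), ← ENNReal.ofReal_mul (by positivity),
    ← ENNReal.ofReal_mul (by positivity), ← ENNReal.ofReal_mul (by positivity)]
  refine ENNReal.ofReal_le_ofReal ?_
  calc (p ^ 2) ^ 5 = |p| ^ 8 * |p| ^ 2 := by rw [← sq_abs]; ring
    _ ≤ 1 * |p| ^ 2 := by gcongr; exact pow_le_one₀ (abs_nonneg p) hp
    _ ≤ _ := by gcongr; exact one_le_angularWeight_sq_mul hq hz

theorem lintegral_normSphere_rpow_mul_sq_first_le (hab : a ≠ b) (hac : a ≠ c) (hbc : b ≠ c)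
    (hF : Measurable F) (hG : Measurable G) (hH : Measurable H) :
    ∫⁻ σ, (F (σ a) ^ 3 * G (σ b) ^ 3 * H (σ c)) ^ (5⁻¹ : ℝ) * ENNReal.ofReal (σ a ^ 2)
        ∂normSphere 3 ≤
      (1024 * ((∫⁻ x, F x) ^ 3 * (∫⁻ x, G x) ^ 3 * ∫⁻ x, H x)) ^ (5⁻¹ : ℝ) := by
  -- The factor `|σ a| ^ 2` used up by the last two Jacobians is supplied by the localization to
  -- `σ a ^ 2`, and `|σ c|` by the two angular weights.
  let X : Fin 5 → EuclideanSpace ℝ (Fin 3) → ℝ≥0∞ :=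
    ![fun σ => F (σ a) * ENNReal.ofReal (angularWeight (σ b) (σ c)),
      fun σ => F (σ a) * ENNReal.ofReal (angularWeight (σ b) (σ c)),
      fun σ => F (σ a) * G (σ b) * ENNReal.ofReal |σ c|,
      fun σ => G (σ b) * ENNReal.ofReal (|σ b| / (σ b ^ 2 + σ c ^ 2)) * ENNReal.ofReal |σ a|,
      fun σ => G (σ b) * H (σ c) * ENNReal.ofReal |σ a|]
  have hX : ∀ i, Measurable (X i) := by
    intro i
    fin_cases i <;> dsimp [X] <;> fun_prop
  have hpoint : ∀ᵐ σ ∂normSphere 3, F (σ a) ^ 3 * G (σ b) ^ 3 * H (σ c) *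
      ENNReal.ofReal (σ a ^ 2) ^ 5 ≤ ∏ i, X i σ := by
    filter_upwards [ae_normSphere_norm_eq_one, ae_normSphere_coord_ne_zero b,
      ae_normSphere_coord_ne_zero c] with σ hσ hb hc
    have ha : |σ a| ≤ 1 := hσ ▸ PiLp.norm_apply_le σ a
    refine (mul_le_mul' le_rfl (ofReal_sq_pow_five_le ha hb hc)).trans_eq ?_
    simp only [X, Fin.prod_univ_five, Matrix.cons_val]
    ring
  have hprod : ∏ i, ∫⁻ σ, X i σ ∂normSphere 3 ≤
      1024 * ((∫⁻ x, F x) ^ 3 * (∫⁻ x, G x) ^ 3 * ∫⁻ x, H x) := by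
    simp only [X, Fin.prod_univ_five, Matrix.cons_val]
    calc _ ≤ (16 * ∫⁻ x, F x) * (16 * ∫⁻ x, F x) * ((∫⁻ x, F x) * ∫⁻ x, G x) *
          (4 * ∫⁻ x, G x) * ((∫⁻ x, G x) * ∫⁻ x, H x) := by
          gcongr
          exacts [lintegral_normSphere_mul_angularWeight_le hab hac hbc hF,
            lintegral_normSphere_mul_angularWeight_le hab hac hbc hF,
            lintegral_normSphere_mul_le hab hac hbc hF hG,
            lintegral_normSphere_mul_poisson_le hbc hab.symm hac.symm hG,
            lintegral_normSphere_mul_le hbc hab.symm hac.symm hG hH]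
      _ = _ := by ring
  have hHolder := lintegral_rpow_inv_mul_le_of_mul_pow_le_prod (by norm_num)
    (fun i => (hX i).aemeasurable) hpoint
  rw [Nat.cast_ofNat] at hHolder
  exact hHolder.trans (ENNReal.rpow_le_rpow hprod (by norm_num))

theorem lintegral_normSphere_rpow_mul_sq_third_le (hab : a ≠ b) (hac : a ≠ c) (hbc : b ≠ c)
    (hF : Measurable F) (hG : Measurable G) (hH : Measurable H) :
    ∫⁻ σ, (F (σ a) ^ 3 * G (σ b) ^ 3 * H (σ c)) ^ (5⁻¹ : ℝ) * ENNReal.ofReal (σ c ^ 2)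
        ∂normSphere 3 ≤
      (1024 * ((∫⁻ x, F x) ^ 3 * (∫⁻ x, G x) ^ 3 * ∫⁻ x, H x)) ^ (5⁻¹ : ℝ) := by
  let X : Fin 5 → EuclideanSpace ℝ (Fin 3) → ℝ≥0∞ :=
    ![fun σ => F (σ a) * G (σ b) * ENNReal.ofReal |σ c|,
      fun σ => F (σ a) * G (σ b) * ENNReal.ofReal |σ c|,
      fun σ => F (σ a) * G (σ b) * ENNReal.ofReal |σ c|,
      fun σ => H (σ c) * ENNReal.ofReal (angularWeight (σ a) (σ b)),
      1]
  have hX : ∀ i, Measurable (X i) := by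
    intro i
    fin_cases i <;> dsimp [X] <;> fun_prop
  have hpoint : ∀ᵐ σ ∂normSphere 3, F (σ a) ^ 3 * G (σ b) ^ 3 * H (σ c) *
      ENNReal.ofReal (σ c ^ 2) ^ 5 ≤ ∏ i, X i σ := by
    filter_upwards [ae_normSphere_norm_eq_one, ae_normSphere_coord_ne_zero a] with σ hσ ha
    have hc : |σ c| ≤ 1 := hσ ▸ PiLp.norm_apply_le σ c
    have hsq : ENNReal.ofReal (σ c ^ 2) ^ 5 ≤ ENNReal.ofReal |σ c| ^ 3 := by
      rw [← sq_abs, ENNReal.ofReal_pow (abs_nonneg _), ← pow_mul]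
      exact pow_le_pow_of_le_one zero_le (ENNReal.ofReal_le_one.2 hc) (by norm_num)
    have hw : 1 ≤ ENNReal.ofReal (angularWeight (σ a) (σ b)) :=
      ENNReal.one_le_ofReal.2 (one_le_angularWeight ha _)
    refine (mul_le_mul' le_rfl (hsq.trans (le_mul_of_one_le_right' hw))).trans_eq ?_
    simp only [X, Fin.prod_univ_five, Matrix.cons_val, Pi.one_apply]
    ring
  have hprod : ∏ i, ∫⁻ σ, X i σ ∂normSphere 3 ≤
      1024 * ((∫⁻ x, F x) ^ 3 * (∫⁻ x, G x) ^ 3 * ∫⁻ x, H x) := by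
    have hpair := lintegral_normSphere_mul_le hab hac hbc hF hG
    simp only [X, Fin.prod_univ_five, Matrix.cons_val, Pi.one_apply, lintegral_one]
    calc _ ≤ ((∫⁻ x, F x) * ∫⁻ x, G x) * ((∫⁻ x, F x) * ∫⁻ x, G x) *
          ((∫⁻ x, F x) * ∫⁻ x, G x) * (1024 * ∫⁻ x, H x) * 1 := by
          gcongr
          · refine (lintegral_normSphere_mul_angularWeight_le hac.symm hbc.symm hab hH).trans ?_
            gcongr
            norm_num
          · exact normSphere_univ_le_one
      _ = _ := by ring
  have hHolder := lintegral_rpow_inv_mul_le_of_mul_pow_le_prod (by norm_num)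
    (fun i => (hX i).aemeasurable) hpoint
  rw [Nat.cast_ofNat] at hHolder
  exact hHolder.trans (ENNReal.rpow_le_rpow hprod (by norm_num))

theorem lintegral_normSphere_rpow_le (hF : Measurable F) (hG : Measurable G) (hH : Measurable H) :
    ∫⁻ σ, (F (σ 0) ^ 3 * G (σ 1) ^ 3 * H (σ 2)) ^ (5⁻¹ : ℝ) ∂normSphere 3 ≤
      12 * ((∫⁻ x, F x) ^ 3 * (∫⁻ x, G x) ^ 3 * ∫⁻ x, H x) ^ (5⁻¹ : ℝ) := by
  let u : EuclideanSpace ℝ (Fin 3) → ℝ≥0∞ := fun σ =>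
    (F (σ 0) ^ 3 * G (σ 1) ^ 3 * H (σ 2)) ^ (5⁻¹ : ℝ)
  have hu : Measurable u := by fun_prop
  set N := (∫⁻ x, F x) ^ 3 * (∫⁻ x, G x) ^ 3 * ∫⁻ x, H x with hN
  have hconst : (1024 * N) ^ (5⁻¹ : ℝ) = 4 * N ^ (5⁻¹ : ℝ) := by
    have h4 : (1024 : ℝ≥0∞) ^ (5⁻¹ : ℝ) = 4 := by
      rw [show (1024 : ℝ≥0∞) = 4 ^ 5 by norm_num]
      exact mod_cast ENNReal.pow_rpow_inv_natCast (n := 5) (by norm_num) 4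
    rw [ENNReal.mul_rpow_of_nonneg _ _ (by norm_num), h4]
  have h0 : ∫⁻ σ, u σ * ENNReal.ofReal (σ 0 ^ 2) ∂normSphere 3 ≤ 4 * N ^ (5⁻¹ : ℝ) :=
    hconst ▸ lintegral_normSphere_rpow_mul_sq_first_le (by decide) (by decide) (by decide) hF hG hH
  have h1 : ∫⁻ σ, u σ * ENNReal.ofReal (σ 1 ^ 2) ∂normSphere 3 ≤ 4 * N ^ (5⁻¹ : ℝ) := by
    simp only [u, mul_comm (F _ ^ 3)]
    rw [← hconst, hN, mul_comm ((∫⁻ x, F x) ^ 3)]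
    exact lintegral_normSphere_rpow_mul_sq_first_le (by decide) (by decide) (by decide) hG hF hH
  have h2 : ∫⁻ σ, u σ * ENNReal.ofReal (σ 2 ^ 2) ∂normSphere 3 ≤ 4 * N ^ (5⁻¹ : ℝ) :=
    hconst ▸ lintegral_normSphere_rpow_mul_sq_third_le (by decide) (by decide) (by decide) hF hG hH
  calc ∫⁻ σ, u σ ∂normSphere 3 = ∫⁻ σ, (u σ * ENNReal.ofReal (σ 0 ^ 2) +
        u σ * ENNReal.ofReal (σ 1 ^ 2) + u σ * ENNReal.ofReal (σ 2 ^ 2)) ∂normSphere 3 := by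
        refine lintegral_congr_ae ?_
        filter_upwards [ae_normSphere_norm_eq_one] with σ hσ
        rw [← mul_add, ← mul_add, ← ENNReal.ofReal_add (sq_nonneg _) (sq_nonneg _),
          ← ENNReal.ofReal_add (by positivity) (sq_nonneg _),
          sum_sq_coords (by decide) (by decide) (by decide), hσ, one_pow, ENNReal.ofReal_one,
          mul_one]
    _ = ∫⁻ σ, u σ * ENNReal.ofReal (σ 0 ^ 2) ∂normSphere 3 +
        ∫⁻ σ, u σ * ENNReal.ofReal (σ 1 ^ 2) ∂normSphere 3 +
        ∫⁻ σ, u σ * ENNReal.ofReal (σ 2 ^ 2) ∂normSphere 3 := by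
        rw [lintegral_add_left (by fun_prop), lintegral_add_left (by fun_prop)]
    _ ≤ 4 * N ^ (5⁻¹ : ℝ) + 4 * N ^ (5⁻¹ : ℝ) + 4 * N ^ (5⁻¹ : ℝ) := by gcongr
    _ = 12 * N ^ (5⁻¹ : ℝ) := by ring

end FiveFactors

theorem lpNorm_of_ne_top {p : ℝ≥0∞} (hp : p ≠ ∞) (g : ℝ → ℝ≥0∞) :
    _root_.lpNorm p g = (∫⁻ x, g x ^ p.toReal) ^ (1 / p.toReal) :=
  if_neg hp

theorem lpNorm_top (g : ℝ → ℝ≥0∞) : _root_.lpNorm ∞ g = essSup g volume :=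
  if_pos rfl

theorem lpNorm_comp_sub_left {p : ℝ≥0∞} (hp : p ≠ ∞) (g : ℝ → ℝ≥0∞) (x : ℝ) :
    _root_.lpNorm p (fun s => g (x - s)) = _root_.lpNorm p g := by
  rw [lpNorm_of_ne_top hp, lpNorm_of_ne_top hp,
    lintegral_sub_left_eq_self (fun s => g s ^ p.toReal) x]

theorem lintegral_normSphere_mul_mul_le_lpNorm {f g h : ℝ → ℝ≥0∞} (hf : Measurable f)
    (hg : Measurable g) (hh : Measurable h) :
    ∫⁻ σ, f (σ 0) * g (σ 1) * h (σ 2) ∂normSphere 3 ≤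
      12 * _root_.lpNorm (5 / 3) f * _root_.lpNorm (5 / 3) g * _root_.lpNorm 5 h := by
  have h53 : (5 / 3 : ℝ≥0∞) ≠ ∞ := ENNReal.div_ne_top (by norm_num) (by norm_num)
  have hcube (y : ℝ≥0∞) : (y ^ 3) ^ (5⁻¹ : ℝ) = y ^ (1 / (5 / 3) : ℝ) := by
    rw [← ENNReal.rpow_natCast, ← ENNReal.rpow_mul]
    norm_num
  have hroot (y : ℝ≥0∞) : ((y ^ (5 / 3 : ℝ)) ^ 3) ^ (5⁻¹ : ℝ) = y := by
    rw [hcube, ← ENNReal.rpow_mul]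
    norm_num
  have hroot' (y : ℝ≥0∞) : (y ^ (5 : ℝ)) ^ (5⁻¹ : ℝ) = y := ENNReal.rpow_rpow_inv (by norm_num) y
  have hmain := lintegral_normSphere_rpow_le (F := fun s => f s ^ (5 / 3 : ℝ))
    (G := fun s => g s ^ (5 / 3 : ℝ)) (H := fun s => h s ^ (5 : ℝ)) (by fun_prop) (by fun_prop)
    (by fun_prop)
  simp only [ENNReal.mul_rpow_of_nonneg _ _ (inv_nonneg.2 (Nat.ofNat_nonneg 5)), hroot, hroot',
    hcube] at hmain
  simp only [lpNorm_of_ne_top h53, lpNorm_of_ne_top (ENNReal.ofNat_ne_top (n := 5)),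
    ENNReal.toReal_div, ENNReal.toReal_ofNat]
  rw [one_div (5 : ℝ), mul_assoc, mul_assoc, ← mul_assoc (_ ^ _)]
  exact hmain

theorem strong_type_at_N :
    ∃ C : ℝ, 0 < C ∧ ∀ f : Fin 3 → ℝ → ℝ,
      (∀ j, Measurable (f j)) → (∀ j x, 0 ≤ f j x) →
      lpNorm ∞ (sphAvg 3 f) ≤ ENNReal.ofReal C *
        lpNorm (5 / 3) (fun x => ENNReal.ofReal (f 0 x)) *
        lpNorm (5 / 3) (fun x => ENNReal.ofReal (f 1 x)) *
        lpNorm 5 (fun x => ENNReal.ofReal (f 2 x)) := by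
  refine ⟨12, by norm_num, fun f hf _ => ?_⟩
  have h53 : (5 / 3 : ℝ≥0∞) ≠ ∞ := ENNReal.div_ne_top (by norm_num) (by norm_num)
  rw [lpNorm_top, ENNReal.ofReal_ofNat]
  refine essSup_le_of_ae_le _ (Filter.Eventually.of_forall fun x => ?_)
  have h := lintegral_normSphere_mul_mul_le_lpNorm (f := fun s => ENNReal.ofReal (f 0 (x - s)))
    (g := fun s => ENNReal.ofReal (f 1 (x - s))) (h := fun s => ENNReal.ofReal (f 2 (x - s)))
    (by fun_prop) (by fun_prop) (by fun_prop)
  rw [lpNorm_comp_sub_left h53 (fun s => ENNReal.ofReal (f 0 s)),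
    lpNorm_comp_sub_left h53 (fun s => ENNReal.ofReal (f 1 s)),
    lpNorm_comp_sub_left ENNReal.ofNat_ne_top (fun s => ENNReal.ofReal (f 2 s))] at h
  simpa only [sphAvg, Fin.prod_univ_three] using h
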